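/- For every complex number q with |q| < 1, ∑_{k∈ℤ} q^{30k²}(q^{9k} − q^{−21k+3}) = φ(q³)·a(q³). (Equation (2.19): the shifted Virasoro character φ(q)q^{−19/30}χ^{1,3}_{5,6}(q) equals φ(q³)a(q³).) -/

import Mathlib

open scoped BigOperators

/-- The Euler function `φ(q) = ∏_{n=1}^∞ (1 - q^n)`. -/
noncomputable def eulerPhi (q : ℂ) : ℂ := ∏' n : ℕ, (1 - q ^ (n + 1))

/-- The first Rogers–Ramanujan series
`a(q) = ∏_{n=1}^∞ 1/((1 - q^{5n-2})(1 - q^{5n-3}))`. -/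
noncomputable def rrA (q : ℂ) : ℂ :=
  ∏' n : ℕ, ((1 - q ^ (5 * n + 3)) * (1 - q ^ (5 * n + 2)))⁻¹

/-- The second Rogers–Ramanujan series
`b(q) = ∏_{n=1}^∞ 1/((1 - q^{5n-1})(1 - q^{5n-4}))`. -/
noncomputable def rrB (q : ℂ) : ℂ :=
  ∏' n : ℕ, ((1 - q ^ (5 * n + 4)) * (1 - q ^ (5 * n + 1)))⁻¹

/-- `G(q) = ∏_{n=1}^∞ (1-q^{15n})(1-q^{15n-7})(1-q^{15n-8})
          - q ∏_{n=1}^∞ (1-q^{15n})(1-q^{15n-13})(1-q^{15n-2})`. -/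
noncomputable def Gf (q : ℂ) : ℂ :=
  (∏' n : ℕ, (1 - q ^ (15 * n + 15)) * (1 - q ^ (15 * n + 8)) * (1 - q ^ (15 * n + 7)))
  - q * ∏' n : ℕ, (1 - q ^ (15 * n + 15)) * (1 - q ^ (15 * n + 2)) * (1 - q ^ (15 * n + 13))

/-- `H(q) = ∏_{n=1}^∞ (1-q^{15n})(1-q^{15n-4})(1-q^{15n-11})
          + q ∏_{n=1}^∞ (1-q^{15n})(1-q^{15n-14})(1-q^{15n-1})`. -/
noncomputable def Hf (q : ℂ) : ℂ :=
  (∏' n : ℕ, (1 - q ^ (15 * n + 15)) * (1 - q ^ (15 * n + 11)) * (1 - q ^ (15 * n + 4)))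
  + q * ∏' n : ℕ, (1 - q ^ (15 * n + 15)) * (1 - q ^ (15 * n + 1)) * (1 - q ^ (15 * n + 14))

/-!
Put `Q = q ^ 3`. In Jacobi's theta series with base `Q ^ 5` evaluated at `Q`, the terms of even and
odd index are, after `k ↦ -k`, the two terms `q ^ (30 k² + 9 k)` and `-q ^ (30 k² - 21 k + 3)`. The
triple product turns the series into `(Q ^ 5; Q ^ 5)_∞ (Q ^ 4; Q ^ 5)_∞ (Q; Q ^ 5)_∞`, which is
`(Q; Q)_∞` without the residue classes 2 and 3 mod 5.

The triple product itself is a limit: `∑ m, [a + b, a + m]_q (-z) ^ m q ^ (m (m - 1) / 2)` equals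
`(q / z; q)_a (z; q)_b` by the two `q`-Pascal rules, one raising `a`, the other raising `b`, and
dominated convergence lets `a = b → ∞`.
-/

open Filter Topology

section GaussianBinomial

variable {K : Type*} [Field K]

/-- The finite `q`-Pochhammer symbol `(a; q)_n`. -/
def qPochhammer (a q : K) (n : ℕ) : K := ∏ i ∈ Finset.range n, (1 - a * q ^ i)

lemma qPochhammer_zero (a q : K) : qPochhammer a q 0 = 1 := Finset.prod_range_zero _

lemma qPochhammer_succ (a q : K) (n : ℕ) :
    qPochhammer a q (n + 1) = qPochhammer a q n * (1 - a * q ^ n) :=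
  Finset.prod_range_succ _ n

/-- The reciprocal `1 / (q; q)_k`, extended by zero to negative `k`, so that
`qPochhammerRecip_sub_one` holds for all integers. -/
def qPochhammerRecip (q : K) : ℤ → K
  | Int.ofNat k => (qPochhammer q q k)⁻¹
  | Int.negSucc _ => 0

lemma qPochhammerRecip_natCast (q : K) (k : ℕ) :
    qPochhammerRecip q k = (qPochhammer q q k)⁻¹ := rfl

lemma qPochhammerRecip_of_neg (q : K) {k : ℤ} (hk : k < 0) : qPochhammerRecip q k = 0 := by
  obtain ⟨n, rfl⟩ := Int.eq_negSucc_of_lt_zero hk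
  rfl

lemma qPochhammerRecip_sub_one {q : K} (hq : ∀ n : ℕ, q ^ (n + 1) ≠ 1) (k : ℤ) :
    qPochhammerRecip q (k - 1) = (1 - q ^ k) * qPochhammerRecip q k := by
  rcases lt_trichotomy k 0 with hk | rfl | hk
  · rw [qPochhammerRecip_of_neg q hk, qPochhammerRecip_of_neg q (by omega), mul_zero]
  · rw [qPochhammerRecip_of_neg q (by omega), zpow_zero, sub_self, zero_mul]
  · obtain ⟨n, rfl⟩ : ∃ n : ℕ, k = (n + 1 : ℕ) := ⟨k.toNat - 1, by omega⟩
    have hfactor : 1 - q * q ^ n ≠ 0 := sub_ne_zero.mpr (pow_succ' q n ▸ (hq n).symm)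
    rw [Nat.cast_succ, add_sub_cancel_right, ← Nat.cast_succ, qPochhammerRecip_natCast,
      qPochhammerRecip_natCast, qPochhammer_succ, zpow_natCast, pow_succ', mul_inv,
      mul_left_comm, mul_inv_cancel₀ hfactor, mul_one]

/-- The Gaussian binomial coefficient `[n, k]_q`, as `(q; q)_n / ((q; q)_k (q; q)_{n-k})` and hence
zero unless `0 ≤ k ≤ n`. It is meaningful only when `q, …, q ^ n` differ from `1`. -/
def gaussBinom (q : K) (n : ℕ) (k : ℤ) : K :=
  qPochhammer q q n * qPochhammerRecip q k * qPochhammerRecip q (n - k)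

lemma gaussBinom_symm (q : K) (n : ℕ) (k : ℤ) : gaussBinom q n (n - k) = gaussBinom q n k := by
  rw [gaussBinom, gaussBinom, sub_sub_cancel, mul_right_comm]

lemma gaussBinom_zero_eq_zero (q : K) {k : ℤ} (hk : k ≠ 0) : gaussBinom q 0 k = 0 := by
  rcases lt_or_gt_of_ne hk with hk | hk
  · rw [gaussBinom, qPochhammerRecip_of_neg q hk, mul_zero, zero_mul]
  · rw [gaussBinom, qPochhammerRecip_of_neg q (k := (0 : ℕ) - k) (by omega), mul_zero]

lemma gaussBinom_zero_zero (q : K) : gaussBinom q 0 0 = 1 := by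
  simp [gaussBinom, qPochhammerRecip, qPochhammer]

lemma gaussBinom_succ {q : K} (hq0 : q ≠ 0) (hq : ∀ n : ℕ, q ^ (n + 1) ≠ 1) (n : ℕ) (k : ℤ) :
    gaussBinom q (n + 1) k = gaussBinom q n (k - 1) + q ^ k * gaussBinom q n k := by
  have hsplit : 1 - q * q ^ n = (1 - q ^ k) + q ^ k * (1 - q ^ ((n : ℤ) + 1 - k)) := by
    rw [mul_sub, ← zpow_add₀ hq0, add_sub_cancel, zpow_add_one₀ hq0, zpow_natCast]
    ring
  have hk := qPochhammerRecip_sub_one hq k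
  have hnk := qPochhammerRecip_sub_one hq ((n : ℤ) + 1 - k)
  rw [show (n : ℤ) + 1 - k - 1 = n - k by ring] at hnk
  rw [gaussBinom, gaussBinom, gaussBinom, qPochhammer_succ, hsplit, hk, hnk, Nat.cast_succ,
    show (n : ℤ) - (k - 1) = n + 1 - k by ring]
  ring

lemma gaussBinom_succ' {q : K} (hq0 : q ≠ 0) (hq : ∀ n : ℕ, q ^ (n + 1) ≠ 1) (n : ℕ) (k : ℤ) :
    gaussBinom q (n + 1) k = q ^ ((n : ℤ) + 1 - k) * gaussBinom q n (k - 1) + gaussBinom q n k := by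
  rw [← gaussBinom_symm q (n + 1), gaussBinom_succ hq0 hq, ← gaussBinom_symm q n k,
    ← gaussBinom_symm q n (k - 1), Nat.cast_succ, show (n : ℤ) + 1 - k - 1 = n - k by ring,
    show (n : ℤ) - (k - 1) = n + 1 - k by ring, add_comm]

end GaussianBinomial

section FiniteTripleProduct

variable {K : Type*} [Field K]

/-- The general term `(-1) ^ m q ^ (m (m - 1) / 2) z ^ m` of Jacobi's theta series; the division
of integers in the exponent is exact. -/
def thetaTerm (q z : K) (m : ℤ) : K := (-z) ^ m * q ^ (m * (m - 1) / 2)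

lemma thetaTerm_zero (q z : K) : thetaTerm q z 0 = 1 := by simp [thetaTerm]

lemma thetaTerm_add_one {q z : K} (hq0 : q ≠ 0) (hz : z ≠ 0) (m : ℤ) :
    thetaTerm q z (m + 1) = -z * q ^ m * thetaTerm q z m := by
  have hexp : (m + 1) * (m + 1 - 1) / 2 = m * (m - 1) / 2 + m := by
    rw [show (m + 1) * (m + 1 - 1) = m * (m - 1) + m * 2 by ring,
      Int.add_mul_ediv_right _ _ two_ne_zero]
  rw [thetaTerm, thetaTerm, hexp, zpow_add_one₀ (neg_ne_zero.mpr hz), zpow_add₀ hq0]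
  ring

lemma thetaTerm_neg {q : K} (hq0 : q ≠ 0) (z : K) (m : ℤ) :
    thetaTerm q z (-m) = thetaTerm q (q / z) m := by
  have hexp : -m * (-m - 1) / 2 = m * (m - 1) / 2 + m := by
    rw [show -m * (-m - 1) = m * (m - 1) + m * 2 by ring, Int.add_mul_ediv_right _ _ two_ne_zero]
  have hbase : -(q / z) = (-z)⁻¹ * q := by rw [inv_neg, neg_mul, div_eq_inv_mul]
  rw [thetaTerm, thetaTerm, hexp, hbase, zpow_add₀ hq0, zpow_neg, mul_zpow, inv_zpow]
  ring

lemma thetaTerm_pow_five_two_mul {q : K} (hq0 : q ≠ 0) (k : ℤ) :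
    thetaTerm (q ^ 5) q (2 * k) = q ^ (10 * k ^ 2 - 3 * k) := by
  have hexp : 2 * k * (2 * k - 1) / 2 = k * (2 * k - 1) := by
    rw [mul_assoc, Int.mul_ediv_cancel_left _ two_ne_zero]
  rw [thetaTerm, hexp, Even.neg_zpow (even_two_mul k), ← zpow_natCast q 5, ← zpow_mul,
    ← zpow_add₀ hq0]
  congr 1
  push_cast
  ring

lemma thetaTerm_pow_five_two_mul_add_one {q : K} (hq0 : q ≠ 0) (k : ℤ) :
    thetaTerm (q ^ 5) q (2 * k + 1) = -q ^ (10 * k ^ 2 + 7 * k + 1) := by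
  rw [thetaTerm_add_one (pow_ne_zero 5 hq0) hq0, thetaTerm_pow_five_two_mul hq0,
    ← zpow_natCast q 5, ← zpow_mul, neg_mul, neg_mul, ← zpow_one_add₀ hq0, ← zpow_add₀ hq0]
  congr 2
  push_cast
  ring

lemma gaussBinom_mul_thetaTerm_succ_right {q z : K} (hq0 : q ≠ 0)
    (hq : ∀ n : ℕ, q ^ (n + 1) ≠ 1) (hz : z ≠ 0) (a b : ℕ) (m : ℤ) :
    gaussBinom q (a + (b + 1)) (a + m) * thetaTerm q z m =
      gaussBinom q (a + b) (a + m) * thetaTerm q z m -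
        z * q ^ b * (gaussBinom q (a + b) (a + (m - 1)) * thetaTerm q z (m - 1)) := by
  have hθ := thetaTerm_add_one hq0 hz (m - 1)
  rw [sub_add_cancel] at hθ
  have hpow : q ^ (((a + b : ℕ) : ℤ) + 1 - (a + m)) * q ^ (m - 1) = q ^ b := by
    rw [← zpow_add₀ hq0, ← zpow_natCast q b]
    congr 1
    push_cast
    ring
  rw [← add_assoc, gaussBinom_succ' hq0 hq, add_sub_assoc (a : ℤ), hθ, ← hpow]
  ring

lemma gaussBinom_mul_thetaTerm_succ_left {q z : K} (hq0 : q ≠ 0)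
    (hq : ∀ n : ℕ, q ^ (n + 1) ≠ 1) (hz : z ≠ 0) (a b : ℕ) (m : ℤ) :
    gaussBinom q (a + 1 + b) ((a + 1 : ℕ) + m) * thetaTerm q z m =
      gaussBinom q (a + b) (a + m) * thetaTerm q z m -
        q / z * q ^ a * (gaussBinom q (a + b) (a + (m + 1)) * thetaTerm q z (m + 1)) := by
  have hpow : q ^ ((a : ℤ) + (m + 1)) = q * q ^ a * q ^ m := by
    rw [zpow_add₀ hq0, zpow_add_one₀ hq0, zpow_natCast]
    ring
  rw [add_right_comm a 1 b, gaussBinom_succ hq0 hq,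
    show ((a + 1 : ℕ) : ℤ) + m = a + (m + 1) by push_cast; ring, ← add_assoc (a : ℤ) m 1,
    add_sub_cancel_right, add_assoc (a : ℤ) m 1, hpow, thetaTerm_add_one hq0 hz]
  field_simp
  ring

theorem hasSum_gaussBinom_mul_thetaTerm [TopologicalSpace K] [IsTopologicalRing K] {q z : K}
    (hq0 : q ≠ 0) (hq : ∀ n : ℕ, q ^ (n + 1) ≠ 1) (hz : z ≠ 0) (a b : ℕ) :
    HasSum (fun m : ℤ => gaussBinom q (a + b) (a + m) * thetaTerm q z m)
      (qPochhammer (q / z) q a * qPochhammer z q b) := by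
  induction a with
  | zero =>
    induction b with
    | zero =>
      have hsupport (m : ℤ) (hm : m ≠ 0) :
          gaussBinom q (0 + 0) ((0 : ℕ) + m) * thetaTerm q z m = 0 := by
        rw [Nat.cast_zero, zero_add, zero_add, gaussBinom_zero_eq_zero q hm, zero_mul]
      simpa [gaussBinom_zero_zero, thetaTerm_zero, qPochhammer_zero]
        using hasSum_single (0 : ℤ) hsupport
    | succ b ih =>
      have hshift := (Equiv.subRight (1 : ℤ)).hasSum_iff.mpr ih
      rw [qPochhammer_succ, ← mul_assoc, mul_one_sub, mul_comm _ (z * q ^ b),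
        funext (gaussBinom_mul_thetaTerm_succ_right hq0 hq hz 0 b)]
      exact ih.sub (hshift.mul_left (z * q ^ b))
  | succ a ih =>
    have hshift := (Equiv.addRight (1 : ℤ)).hasSum_iff.mpr ih
    rw [qPochhammer_succ, mul_right_comm, mul_one_sub, mul_comm _ (q / z * q ^ a),
      funext (gaussBinom_mul_thetaTerm_succ_left hq0 hq hz a b)]
    exact ih.sub (hshift.mul_left (q / z * q ^ a))

end FiniteTripleProduct

section InfiniteProducts

variable {K : Type*} [NormedField K] {q : K}

lemma pow_succ_ne_one_of_norm_lt_one (hq : ‖q‖ < 1) (n : ℕ) : q ^ (n + 1) ≠ 1 := fun h =>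
  (pow_lt_one₀ (norm_nonneg q) hq n.succ_ne_zero).ne (by rw [← norm_pow, h, norm_one])

lemma norm_pow_succ_lt_one (hq : ‖q‖ < 1) (n : ℕ) : ‖q ^ (n + 1)‖ < 1 :=
  norm_pow q (n + 1) ▸ pow_lt_one₀ (norm_nonneg q) hq n.succ_ne_zero

lemma summable_norm_neg_mul_pow (a : K) (hq : ‖q‖ < 1) : Summable fun n : ℕ => ‖-(a * q ^ n)‖ := by
  simpa only [norm_neg, norm_mul, norm_pow] using
    (summable_geometric_of_lt_one (norm_nonneg q) hq).mul_left ‖a‖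

/-- The infinite `q`-Pochhammer symbol `(a; q)_∞`, used for `‖q‖ < 1`. -/
noncomputable def qPochhammerInf (a q : K) : K := ∏' n : ℕ, (1 - a * q ^ n)

variable [CompleteSpace K]

lemma multipliable_one_sub_mul_pow (a : K) (hq : ‖q‖ < 1) :
    Multipliable fun n : ℕ => 1 - a * q ^ n := by
  simpa only [sub_eq_add_neg] using
    multipliable_one_add_of_summable (summable_norm_neg_mul_pow a hq)

lemma qPochhammerInf_ne_zero {a : K} (hq : ‖q‖ < 1) (ha : ∀ n : ℕ, a * q ^ n ≠ 1) :
    qPochhammerInf a q ≠ 0 := by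
  simpa only [qPochhammerInf, sub_eq_add_neg] using
    tprod_one_add_ne_zero_of_summable
      (fun n => by simpa only [← sub_eq_add_neg] using sub_ne_zero.mpr (ha n).symm)
      (summable_norm_neg_mul_pow a hq)

lemma qPochhammerInf_self_ne_zero (hq : ‖q‖ < 1) : qPochhammerInf q q ≠ 0 :=
  qPochhammerInf_ne_zero hq fun n => pow_succ' q n ▸ pow_succ_ne_one_of_norm_lt_one hq n

lemma tendsto_qPochhammer (a : K) (hq : ‖q‖ < 1) :
    Tendsto (qPochhammer a q) atTop (𝓝 (qPochhammerInf a q)) :=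
  (multipliable_one_sub_mul_pow a hq).tendsto_prod_tprod_nat

lemma qPochhammerInf_eq_prod_fin (a : K) (hq : ‖q‖ < 1) (d : ℕ) [NeZero d] :
    qPochhammerInf a q = ∏ j : Fin d, qPochhammerInf (a * q ^ (j : ℕ)) (q ^ d) := by
  have hqd : ‖q ^ d‖ < 1 := norm_pow q d ▸ pow_lt_one₀ (norm_nonneg q) hq (NeZero.ne d)
  let e : Fin d × ℕ ≃ ℕ := (Equiv.prodComm _ _).trans (Nat.divModEquiv d).symm
  have hterm (j : Fin d) (n : ℕ) :
      1 - a * q ^ e (j, n) = 1 - a * q ^ (j : ℕ) * (q ^ d) ^ n := by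
    rw [show e (j, n) = j + d * n from (add_comm _ _).trans (congrArg _ (mul_comm n d)),
      pow_add, pow_mul, mul_assoc]
  have hfiber (j : Fin d) : Multipliable fun n : ℕ => 1 - a * q ^ e (j, n) := by
    simpa only [hterm] using multipliable_one_sub_mul_pow (a * q ^ (j : ℕ)) hqd
  have hall : Multipliable fun p => 1 - a * q ^ e p :=
    (e.multipliable_iff (f := fun n => 1 - a * q ^ n)).mpr (multipliable_one_sub_mul_pow a hq)
  calc qPochhammerInf a q = ∏' p, (1 - a * q ^ e p) :=
        (e.tprod_eq fun n => 1 - a * q ^ n).symm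
    _ = ∏ j : Fin d, ∏' n : ℕ, (1 - a * q ^ e (j, n)) := by
      rw [hall.tprod_prod' hfiber, tprod_fintype]
    _ = ∏ j : Fin d, qPochhammerInf (a * q ^ (j : ℕ)) (q ^ d) := by
      simp only [hterm, qPochhammerInf]

lemma tendsto_qPochhammerRecip (hq : ‖q‖ < 1) :
    Tendsto (qPochhammerRecip q) atTop (𝓝 (qPochhammerInf q q)⁻¹) := by
  rw [← Nat.map_cast_int_atTop, tendsto_map'_iff]
  exact (tendsto_qPochhammer q hq).inv₀ (qPochhammerInf_self_ne_zero hq)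

lemma tendsto_gaussBinom_central (hq : ‖q‖ < 1) (m : ℤ) :
    Tendsto (fun n : ℕ => gaussBinom q (n + n) (n + m)) atTop (𝓝 (qPochhammerInf q q)⁻¹) := by
  have hnum : Tendsto (fun n : ℕ => qPochhammer q q (n + n)) atTop (𝓝 (qPochhammerInf q q)) :=
    (tendsto_qPochhammer q hq).comp (tendsto_id.atTop_add_atTop tendsto_id)
  have hrecip (c : ℤ) : Tendsto (fun n : ℕ => qPochhammerRecip q (n + c)) atTop
      (𝓝 (qPochhammerInf q q)⁻¹) :=
    (tendsto_qPochhammerRecip hq).comp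
      (tendsto_atTop_add_const_right _ c tendsto_natCast_atTop_atTop)
  have hlim := (hnum.mul (hrecip m)).mul (hrecip (-m))
  rw [mul_inv_cancel₀ (qPochhammerInf_self_ne_zero hq), one_mul] at hlim
  refine hlim.congr fun n => ?_
  rw [gaussBinom, Nat.cast_add, add_sub_add_left_eq_sub, sub_eq_add_neg]

lemma exists_norm_qPochhammerRecip_le (hq : ‖q‖ < 1) :
    ∃ C, ∀ k, ‖qPochhammerRecip q k‖ ≤ C := by
  obtain ⟨C, hC⟩ := (Metric.isBounded_range_of_tendsto _ ((tendsto_qPochhammer q hq).inv₀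
    (qPochhammerInf_self_ne_zero hq))).exists_norm_le
  refine ⟨C, fun k => ?_⟩
  rcases k with n | _
  · exact hC _ ⟨n, rfl⟩
  · exact norm_zero.trans_le ((norm_nonneg _).trans (hC _ ⟨0, rfl⟩))

lemma exists_norm_gaussBinom_le (hq : ‖q‖ < 1) : ∃ C, ∀ n k, ‖gaussBinom q n k‖ ≤ C := by
  obtain ⟨A, hA⟩ := (Metric.isBounded_range_of_tendsto _
    (tendsto_qPochhammer q hq)).exists_norm_le
  obtain ⟨B, hB⟩ := exists_norm_qPochhammerRecip_le hq
  have hA0 : 0 ≤ A := (norm_nonneg _).trans (hA _ ⟨0, rfl⟩)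
  have hB0 : 0 ≤ B := (norm_nonneg _).trans (hB 0)
  refine ⟨A * B * B, fun n k => ?_⟩
  rw [gaussBinom, norm_mul, norm_mul]
  gcongr
  exacts [hA _ ⟨n, rfl⟩, hB k, hB _]

end InfiniteProducts

section TripleProduct

variable {K : Type*} [NormedField K] {q z : K}

lemma summable_norm_thetaTerm_natCast (hq0 : q ≠ 0) (hq : ‖q‖ < 1) (hz : z ≠ 0) :
    Summable fun n : ℕ => ‖thetaTerm q z n‖ := by
  have hne (n : ℕ) : ‖thetaTerm q z n‖ ≠ 0 := norm_ne_zero_iff.mpr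
    (mul_ne_zero (zpow_ne_zero _ (neg_ne_zero.mpr hz)) (zpow_ne_zero _ hq0))
  have hratio (n : ℕ) : ‖thetaTerm q z (n + 1)‖ / ‖thetaTerm q z n‖ = ‖z‖ * ‖q‖ ^ n := by
    rw [thetaTerm_add_one hq0 hz, norm_mul, mul_div_cancel_right₀ _ (hne n), norm_mul, norm_neg,
      zpow_natCast, norm_pow]
  refine summable_of_ratio_test_tendsto_lt_one zero_lt_one (Eventually.of_forall hne) ?_
  simpa only [Nat.cast_succ, norm_norm, hratio, mul_zero] using
    (tendsto_pow_atTop_nhds_zero_of_lt_one (norm_nonneg q) hq).const_mul ‖z‖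

lemma summable_norm_thetaTerm (hq0 : q ≠ 0) (hq : ‖q‖ < 1) (hz : z ≠ 0) :
    Summable fun m : ℤ => ‖thetaTerm q z m‖ := by
  have hneg : Summable fun n : ℕ => ‖thetaTerm q z (-n)‖ := by
    simpa only [thetaTerm_neg hq0] using
      summable_norm_thetaTerm_natCast hq0 hq (div_ne_zero hq0 hz)
  exact .of_nat_of_neg (summable_norm_thetaTerm_natCast hq0 hq hz) hneg

variable [CompleteSpace K]

theorem jacobi_triple_product (hq0 : q ≠ 0) (hq : ‖q‖ < 1) (hz : z ≠ 0) :
    ∑' m : ℤ, thetaTerm q z m =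
      qPochhammerInf q q * (qPochhammerInf (q / z) q * qPochhammerInf z q) := by
  obtain ⟨C, hC⟩ := exists_norm_gaussBinom_le hq
  have hsum_lim : Tendsto (fun n : ℕ => ∑' m : ℤ, gaussBinom q (n + n) (n + m) * thetaTerm q z m)
      atTop (𝓝 (∑' m : ℤ, (qPochhammerInf q q)⁻¹ * thetaTerm q z m)) := by
    have hbound (n : ℕ) (m : ℤ) :
        ‖gaussBinom q (n + n) (n + m) * thetaTerm q z m‖ ≤ C * ‖thetaTerm q z m‖ :=
      (norm_mul_le _ _).trans (mul_le_mul_of_nonneg_right (hC _ _) (norm_nonneg _))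
    have hterm (m : ℤ) := (tendsto_gaussBinom_central hq m).mul_const (thetaTerm q z m)
    exact tendsto_tsum_of_dominated_convergence ((summable_norm_thetaTerm hq0 hq hz).mul_left C)
      hterm (Eventually.of_forall hbound)
  have hprod_lim := (tendsto_qPochhammer (q / z) hq).mul (tendsto_qPochhammer z hq)
  have hfinite (n : ℕ) : ∑' m : ℤ, gaussBinom q (n + n) (n + m) * thetaTerm q z m =
      qPochhammer (q / z) q n * qPochhammer z q n :=
    (hasSum_gaussBinom_mul_thetaTerm hq0 (pow_succ_ne_one_of_norm_lt_one hq) hz n n).tsum_eq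
  have hlim := tendsto_nhds_unique (hsum_lim.congr hfinite) hprod_lim
  rwa [tsum_mul_left, inv_mul_eq_iff_eq_mul₀ (qPochhammerInf_self_ne_zero hq)] at hlim

end TripleProduct

lemma tsum_int_eq_tsum_even_add_odd {M : Type*} [AddCommMonoid M] [TopologicalSpace M]
    [ContinuousAdd M] [T3Space M] {f : ℤ → M} (hf : Summable f) :
    ∑' m, f m = ∑' k, (f (2 * k) + f (2 * k + 1)) := by
  let e : ℤ × Fin 2 ≃ ℤ := (Int.divModEquiv 2).symm
  have hfe : Summable fun p => f (e p) := e.summable_iff.mpr hf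
  calc ∑' m, f m = ∑' p, f (e p) := (e.tsum_eq f).symm
    _ = ∑' (k) (j), f (e (k, j)) := hfe.tsum_prod' fun _ => Summable.of_finite
    _ = ∑' k, (f (2 * k) + f (2 * k + 1)) := by simp [e, Fin.sum_univ_two, mul_comm]

section RogersRamanujan

variable {K : Type*} [NormedField K] [CompleteSpace K] {q : K}

lemma qPochhammerInf_pow_succ_ne_zero (hq : ‖q‖ < 1) (j d : ℕ) :
    qPochhammerInf (q ^ (j + 1)) (q ^ (d + 1)) ≠ 0 :=
  qPochhammerInf_ne_zero (norm_pow_succ_lt_one hq d) fun n => by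
    rw [← pow_mul, ← pow_add, add_right_comm]
    exact pow_succ_ne_one_of_norm_lt_one hq _

lemma tprod_inv_eq_qPochhammerInf (hq : ‖q‖ < 1) :
    ∏' n : ℕ, ((1 - q ^ (5 * n + 3)) * (1 - q ^ (5 * n + 2)))⁻¹ =
      (qPochhammerInf (q ^ 3) (q ^ 5) * qPochhammerInf (q ^ 2) (q ^ 5))⁻¹ := by
  have hq5 := norm_pow_succ_lt_one hq 4
  have hfactor (j n : ℕ) : q ^ (5 * n + j) = q ^ j * (q ^ 5) ^ n := by ring
  have hmul := (multipliable_one_sub_mul_pow (q ^ 3) hq5).tprod_mul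
    (multipliable_one_sub_mul_pow (q ^ 2) hq5)
  simp only [hfactor]
  rw [Multipliable.tprod_inv₀, hmul, qPochhammerInf, qPochhammerInf]
  · exact (multipliable_one_sub_mul_pow (q ^ 3) hq5).mul (multipliable_one_sub_mul_pow (q ^ 2) hq5)
  · rw [hmul]
    exact mul_ne_zero (qPochhammerInf_pow_succ_ne_zero hq 2 4)
      (qPochhammerInf_pow_succ_ne_zero hq 1 4)

theorem tsum_thetaTerm_pow_five (hq0 : q ≠ 0) (hq : ‖q‖ < 1) :
    ∑' m : ℤ, thetaTerm (q ^ 5) q m = (∏' n : ℕ, (1 - q ^ (n + 1))) *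
      ∏' n : ℕ, ((1 - q ^ (5 * n + 3)) * (1 - q ^ (5 * n + 2)))⁻¹ := by
  have hq5 := norm_pow_succ_lt_one hq 4
  have heuler : ∏' n : ℕ, (1 - q ^ (n + 1)) = qPochhammerInf q (q ^ 5) *
      qPochhammerInf (q ^ 2) (q ^ 5) * qPochhammerInf (q ^ 3) (q ^ 5) *
      qPochhammerInf (q ^ 4) (q ^ 5) * qPochhammerInf (q ^ 5) (q ^ 5) := by
    simpa [qPochhammerInf, Fin.prod_univ_five, ← pow_succ'] using
      qPochhammerInf_eq_prod_fin q hq 5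
  have hdiv : q ^ 5 / q = q ^ 4 := by field_simp
  have hne2 := qPochhammerInf_pow_succ_ne_zero hq 1 4
  have hne3 := qPochhammerInf_pow_succ_ne_zero hq 2 4
  rw [jacobi_triple_product (pow_ne_zero 5 hq0) hq5 hq0, tprod_inv_eq_qPochhammerInf hq, heuler,
    hdiv]
  field_simp

theorem virasoro_char_13_eq_phi_a_general (hq : ‖q‖ < 1) :
    ∑' k : ℤ, q ^ (30 * k ^ 2) * (q ^ (9 * k) - q ^ (-21 * k + 3)) =
      (∏' n : ℕ, (1 - (q ^ 3) ^ (n + 1))) *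
        ∏' n : ℕ, ((1 - (q ^ 3) ^ (5 * n + 3)) * (1 - (q ^ 3) ^ (5 * n + 2)))⁻¹ := by
  rcases eq_or_ne q 0 with rfl | hq0
  · have hvanish (k : ℤ) (hk : k ≠ 0) :
        (0 : K) ^ (30 * k ^ 2) * (0 ^ (9 * k) - 0 ^ (-21 * k + 3)) = 0 := by
      rw [zero_zpow _ (by positivity), zero_mul]
    rw [tsum_eq_single 0 hvanish]
    simp
  have hq3 : q ^ 3 ≠ 0 := pow_ne_zero 3 hq0
  have hnorm : ‖q ^ 3‖ < 1 := norm_pow_succ_lt_one hq 2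
  let θ : ℤ → K := thetaTerm ((q ^ 3) ^ 5) (q ^ 3)
  have hsum : Summable θ :=
    (summable_norm_thetaTerm (pow_ne_zero 5 hq3) (norm_pow_succ_lt_one hnorm 4) hq3).of_norm
  have hterm (k : ℤ) : q ^ (30 * k ^ 2) * (q ^ (9 * k) - q ^ (-21 * k + 3)) =
      θ (2 * -k) + θ (2 * -k + 1) := by
    dsimp only [θ]
    rw [thetaTerm_pow_five_two_mul hq3, thetaTerm_pow_five_two_mul_add_one hq3,
      ← zpow_natCast q 3, ← zpow_mul, ← zpow_mul, mul_sub, ← zpow_add₀ hq0, ← zpow_add₀ hq0,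
      sub_eq_add_neg]
    congr 3 <;> push_cast <;> ring
  calc ∑' k : ℤ, q ^ (30 * k ^ 2) * (q ^ (9 * k) - q ^ (-21 * k + 3))
    _ = ∑' k, (θ (2 * -k) + θ (2 * -k + 1)) := tsum_congr hterm
    _ = ∑' k, (θ (2 * k) + θ (2 * k + 1)) :=
      (Equiv.neg ℤ).tsum_eq fun k => θ (2 * k) + θ (2 * k + 1)
    _ = ∑' m, θ m := (tsum_int_eq_tsum_even_add_odd hsum).symm
    _ = _ := tsum_thetaTerm_pow_five hq3 hnorm

end RogersRamanujan

theorem virasoro_char_13_eq_phi_a (q : ℂ) (hq : ‖q‖ < 1) :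
    ∑' k : ℤ, q ^ (30 * k ^ 2) * (q ^ (9 * k) - q ^ (-21 * k + 3)) =
      eulerPhi (q ^ 3) * rrA (q ^ 3) :=
  virasoro_char_13_eq_phi_a_general hq
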